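/- arXiv:2009.06362 — 4 statements merged into one kernel-verified Lean document; each statement's English description precedes it below -/
import Mathlib

section
/- Divergence formula for the linearised operator when H is a multiple of the identity (Lemma 3.1, identity (15')). Let Ω ⊆ ℝⁿ be a domain with n ≥ 3, let u ∈ C³(Ω), let H₂ : Ω×ℝ×ℝⁿ → ℝ be C¹ and set H(x,z,ξ) := H₂(x,z,ξ) I, and let 2 ≤ k ≤ n. Then at every point of Ω and for every index j, Σ_i ∂_i(F[u]^{ij}) = −(n−k+1) Σ_i ∂_i(H₂[u]) · T_{k−2}(A_H[u])^{ij}, where H₂[u](x) := H₂(x,u(x),∇u(x)) and ∂_i denotes the i-th partial derivative of the indicated composite function of x. -/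
open MeasureTheory Metric Set Matrix

noncomputable section

/-- The `k`-th elementary symmetric polynomial of the eigenvalues of an `n × n` real
matrix, defined via the coefficients of the characteristic polynomial. -/
def esymmMat {n : ℕ} (k : ℕ) (A : Matrix (Fin n) (Fin n) ℝ) : ℝ :=
  (-1 : ℝ) ^ k * A.charpoly.coeff (n - k)

/-- `λ(A) ∈ Γ_k^+`, i.e. `σ_j(A) > 0` for all `1 ≤ j ≤ k`. -/
def GammaPlus {n : ℕ} (k : ℕ) (A : Matrix (Fin n) (Fin n) ℝ) : Prop :=
  ∀ j : ℕ, 1 ≤ j → j ≤ k → 0 < esymmMat j A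

/-- The Newton tensors `T_0(A) = I`, `T_j(A) = σ_j(A) I - T_{j-1}(A) A`. -/
def newtonT {n : ℕ} : ℕ → Matrix (Fin n) (Fin n) ℝ → Matrix (Fin n) (Fin n) ℝ
  | 0, _ => 1
  | (j + 1), A => esymmMat (j + 1) A • (1 : Matrix (Fin n) (Fin n) ℝ) - newtonT j A * A

/-- `i`-th partial derivative. -/
def pd {n : ℕ} (i : Fin n) (w : (Fin n → ℝ) → ℝ) (x : Fin n → ℝ) : ℝ :=
  fderiv ℝ w x (Pi.single i 1)

/-- Gradient as a vector. -/
def grad {n : ℕ} (w : (Fin n → ℝ) → ℝ) (x : Fin n → ℝ) : Fin n → ℝ :=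
  fun i => pd i w x

/-- Hessian matrix. -/
def hess {n : ℕ} (w : (Fin n → ℝ) → ℝ) (x : Fin n → ℝ) : Matrix (Fin n) (Fin n) ℝ :=
  Matrix.of fun i j => pd i (pd j w) x

/-- Squared Euclidean norm of a vector. -/
def normSq {n : ℕ} (ξ : Fin n → ℝ) : ℝ := ∑ i, ξ i ^ 2

/-- Euclidean norm of a vector. -/
def vnorm {n : ℕ} (ξ : Fin n → ℝ) : ℝ := Real.sqrt (∑ i, ξ i ^ 2)

/-- Operator norm of a matrix, viewed as a linear map between Euclidean spaces. -/
def matNorm {n : ℕ} (M : Matrix (Fin n) (Fin n) ℝ) : ℝ :=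
  ‖LinearMap.toContinuousLinearMap (Matrix.toEuclideanLin M)‖

/-- Laplacian. -/
def lapl {n : ℕ} (w : (Fin n → ℝ) → ℝ) (x : Fin n → ℝ) : ℝ := ∑ l, pd l (pd l w) x

/-- `W^{2,p}` norm (with classical derivatives) on a set. -/
def W2pNorm {n : ℕ} (p : ℝ) (w : (Fin n → ℝ) → ℝ) (B : Set (Fin n → ℝ)) : ℝ :=
  (∫ x in B, (|w x| ^ p + vnorm (grad w x) ^ p + matNorm (hess w x) ^ p)) ^ (1 / p)

/-- `C^{1,1}_loc` on a set: continuously differentiable with locally Lipschitz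
first derivatives. -/
def C11On {E F : Type*} [NormedAddCommGroup E] [NormedSpace ℝ E]
    [NormedAddCommGroup F] [NormedSpace ℝ F] (f : E → F) (s : Set E) : Prop :=
  ContDiffOn ℝ 1 f s ∧
    ∀ x ∈ s, ∃ (K : NNReal) (t : Set E), t ∈ nhdsWithin x s ∧
      LipschitzOnWith K (fderivWithin ℝ f s) t

/-- First order difference quotient `∇_l^h`. -/
def dq {n : ℕ} (l : Fin n) (h : ℝ) (w : (Fin n → ℝ) → ℝ) (x : Fin n → ℝ) : ℝ :=
  (w (x + h • (Pi.single l 1 : Fin n → ℝ)) - w x) / h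

/-- Second order difference quotient `Δ_{ll}^h`. -/
def ddq {n : ℕ} (l : Fin n) (h : ℝ) (w : (Fin n → ℝ) → ℝ) (x : Fin n → ℝ) : ℝ :=
  (w (x + h • (Pi.single l 1 : Fin n → ℝ)) - 2 * w x + w (x - h • (Pi.single l 1 : Fin n → ℝ))) / h ^ 2

/-- `L^s` seminorm (as an extended real number) of a function on a set. -/
def lpN {n : ℕ} (s : ℝ) (w : (Fin n → ℝ) → ℝ) (S : Set (Fin n → ℝ)) : ENNReal :=
  (∫⁻ x in S, ENNReal.ofReal (|w x| ^ s)) ^ (1 / s)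

end

/-!
Since `det (1 + tA) = ∑ σ_m(A) t^m` and `adj (1 + tA) = ∑ T_m(A) t^m`, Jacobi's formula for the
derivative of a determinant says, coefficient by coefficient, that `∂σ_{m+1}(A) = tr (T_m(A) ∂A)`.
Along the ray `s ↦ sA` this is Euler's identity `tr (T_m A) = (m+1) σ_{m+1}`, whence
`tr T_m = (n-m) σ_m`.

For `A = ∇²u - hI` the third derivatives of `u` cancel in `∂_j A_{li} - ∂_i A_{lj}`, leaving
`(∂_i h) δ_{lj} - (∂_j h) δ_{li}`. Taking the divergence of `T_{m+1} = σ_{m+1} I - T_m A` therefore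
gives `div T_{m+1} = T_m ∇h - (tr T_m) ∇h - (div T_m) A`, and by induction on `m` the right-hand
side collapses to `-(n-m-1) T_m ∇h`.
-/

open Polynomial

section LinearPencil

variable {R : Type*} [CommRing R] {ι : Type*} [DecidableEq ι]

/-- The linear pencil `1 + tA` as a matrix of polynomials in `t`. Its determinant generates the
`σ_m(A)`, its adjugate the Newton tensors `T_m(A)`. -/
noncomputable def linearPencil (A : Matrix ι ι R) : Matrix ι ι R[X] :=
  1 + (X : R[X]) • A.map C

theorem map_eval_linearPencil (A : Matrix ι ι R) (t : R) :
    (linearPencil A).map (eval t) = 1 + t • A := by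
  ext i j
  by_cases hij : i = j <;> simp [linearPencil, hij, mul_comm t]

variable [Fintype ι]

theorem eval_det_linearPencil (A : Matrix ι ι R) (t : R) :
    (linearPencil A).det.eval t = (1 + t • A).det := by
  rw [← map_eval_linearPencil]
  exact RingHom.map_det (evalRingHom t) (linearPencil A)

theorem eval_adjugate_linearPencil (A : Matrix ι ι R) (t : R) (i j : ι) :
    ((linearPencil A).adjugate i j).eval t = (1 + t • A).adjugate i j := by
  rw [← map_eval_linearPencil]
  exact congrFun₂ (RingHom.map_adjugate (evalRingHom t) (linearPencil A)) i j

theorem natDegree_det_linearPencil_le (A : Matrix ι ι R) :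
    (linearPencil A).det.natDegree ≤ Fintype.card ι := by
  simpa [linearPencil, add_comm] using natDegree_det_X_add_C_le A 1

theorem map_coeff_zero_adjugate_linearPencil (A : Matrix ι ι R) :
    (linearPencil A).adjugate.map (coeff · 0) = 1 := by
  ext i j
  simp [coeff_zero_eq_eval_zero, eval_adjugate_linearPencil]

theorem map_coeff_succ_adjugate_linearPencil (A : Matrix ι ι R) (m : ℕ) :
    (linearPencil A).adjugate.map (coeff · (m + 1)) =
      (linearPencil A).det.coeff (m + 1) • 1 - (linearPencil A).adjugate.map (coeff · m) * A := by
  have adjugate_mul_eq : (linearPencil A).adjugate + (X : R[X]) •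
      ((linearPencil A).adjugate * A.map C) = (linearPencil A).det • 1 := by
    rw [← adjugate_mul (linearPencil A)]
    nth_rw 4 [linearPencil]
    rw [mul_add, mul_one, mul_smul_comm]
  rw [eq_sub_iff_add_eq]
  ext i j
  have h := congrArg (coeff · (m + 1)) (congrFun₂ adjugate_mul_eq i j)
  by_cases hij : i = j <;> simpa [Matrix.mul_apply, hij, finsetSum_coeff] using h

end LinearPencil

section JacobiFormula

variable {𝕜 : Type*} [NontriviallyNormedField 𝕜] {E : Type*} [NormedAddCommGroup E]
  [NormedSpace 𝕜 E] {ι : Type*} [Fintype ι] [DecidableEq ι] {A : E → Matrix ι ι 𝕜}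
  {A' : ι → ι → E →L[𝕜] 𝕜} {x : E}

theorem hasFDerivAt_matrix_det (hA : ∀ i j, HasFDerivAt (fun y => A y i j) (A' i j) x) :
    HasFDerivAt (fun y => (A y).det) (∑ i, ∑ j, (A x).adjugate j i • A' i j) x := by
  let detL : ContinuousMultilinearMap 𝕜 (fun _ : ι => ι → 𝕜) 𝕜 :=
    { (detRowAlternating (n := ι) (R := 𝕜)).toMultilinearMap with
      cont := Continuous.matrix_det (A := fun M : Matrix ι ι 𝕜 => M) continuous_id }
  have hrow (i : ι) : HasFDerivAt (fun y => A y i) (ContinuousLinearMap.pi (A' i)) x :=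
    hasFDerivAt_pi.2 (hA i)
  refine (HasFDerivAt.multilinear_comp detL hrow).congr_fderiv ?_
  ext v
  have expand_row (i : ι) :
      ((A x).updateRow i fun j => A' i j v).det = ∑ j, (A x).adjugate j i * A' i j v := by
    rw [← cramer_transpose_apply, cramer_eq_adjugate_mulVec, ← adjugate_transpose]
    rfl
  simpa using! Finset.sum_congr rfl fun i _ => expand_row i

theorem differentiableAt_coeff_det_linearPencil
    (hA : ∀ i j, DifferentiableAt 𝕜 (fun y => A y i j) x) (m : ℕ) :
    DifferentiableAt 𝕜 (fun y => (linearPencil (A y)).det.coeff m) x := by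
  simp only [linearPencil, coeff_det_one_add_X_smul_eq_sum_minors]
  exact DifferentiableAt.fun_sum fun s _ =>
    (hasFDerivAt_matrix_det fun i j : s => (hA i j).hasFDerivAt).differentiableAt

theorem hasFDerivAt_coeff_det_linearPencil
    (hA : ∀ i j, HasFDerivAt (fun y => A y i j) (A' i j) x) (m : ℕ) :
    HasFDerivAt (fun y => (linearPencil (A y)).det.coeff (m + 1))
      (∑ i, ∑ j, ((linearPencil (A x)).adjugate j i).coeff m • A' i j) x := by
  set c : ℕ → E → 𝕜 := fun l y => (linearPencil (A y)).det.coeff l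
  have hcdiff (l : ℕ) : DifferentiableAt 𝕜 (c l) x :=
    differentiableAt_coeff_det_linearPencil (fun i j => (hA i j).differentiableAt) l
  set N := max (Fintype.card ι + 1) (m + 2)
  have det_eq_sum (t : 𝕜) (y : E) :
      (1 + t • A y).det = ∑ l ∈ Finset.range N, c l y * t ^ l := by
    have hdeg := natDegree_det_linearPencil_le (A y)
    rw [← eval_det_linearPencil, eval_eq_sum_range' (n := N) (by omega)]
  refine (hcdiff (m + 1)).hasFDerivAt.congr_fderiv ?_
  ext v
  have hpoly : ∑ l ∈ Finset.range N, monomial l (fderiv 𝕜 (c l) x v) =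
      X * ∑ i, ∑ j, (linearPencil (A x)).adjugate j i * C (A' i j v) := by
    refine Polynomial.funext fun t => ?_
    have hcoeffwise : HasFDerivAt (fun y => (1 + t • A y).det)
        (∑ l ∈ Finset.range N, t ^ l • fderiv 𝕜 (c l) x) x := by
      simp only [det_eq_sum]
      exact HasFDerivAt.fun_sum fun l _ => (hcdiff l).hasFDerivAt.mul_const (t ^ l)
    have hjacobi : HasFDerivAt (fun y => (1 + t • A y).det)
        (∑ i, ∑ j, (1 + t • A x).adjugate j i • t • A' i j) x :=
      hasFDerivAt_matrix_det fun i j => ((hA i j).const_smul t).const_add _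
    have h := DFunLike.congr_fun (hcoeffwise.unique hjacobi) v
    simpa [eval_finsetSum, eval_adjugate_linearPencil, Finset.mul_sum, mul_comm (t ^ _),
      mul_left_comm t] using h
  have hcoeff := congrArg (coeff · (m + 1)) hpoly
  have hmN : m + 1 < N := by omega
  simpa [finsetSum_coeff, coeff_monomial, hmN] using hcoeff

end JacobiFormula

section NewtonTensor

variable {n m : ℕ}

theorem esymmMat_eq_sum_minors (hm : m ≤ n) (A : Matrix (Fin n) (Fin n) ℝ) :
    esymmMat m A = ∑ s ∈ Finset.univ.powersetCard m,
      (A.submatrix (Subtype.val : s → Fin n) (Subtype.val : s → Fin n)).det := by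
  have h := charpoly_coeff_eq_sum_minors A m (by simpa using hm)
  rw [Fintype.card_fin] at h
  rw [esymmMat, h, ← mul_assoc, ← mul_pow, neg_one_mul, neg_neg, one_pow, one_mul]

theorem esymmMat_eq_coeff_det_linearPencil (hm : m ≤ n) (A : Matrix (Fin n) (Fin n) ℝ) :
    esymmMat m A = (linearPencil A).det.coeff m := by
  rw [esymmMat_eq_sum_minors hm, linearPencil, coeff_det_one_add_X_smul_eq_sum_minors]

theorem esymmMat_smul (hm : m ≤ n) (s : ℝ) (A : Matrix (Fin n) (Fin n) ℝ) :
    esymmMat m (s • A) = s ^ m * esymmMat m A := by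
  simp only [esymmMat_eq_sum_minors hm, Finset.mul_sum]
  refine Finset.sum_congr rfl fun t ht => ?_
  rw [submatrix_smul, Pi.smul_apply, Pi.smul_apply, det_smul, Fintype.card_coe,
    (Finset.mem_powersetCard.1 ht).2]

theorem newtonT_eq_map_coeff_adjugate_linearPencil (hm : m ≤ n) (A : Matrix (Fin n) (Fin n) ℝ) :
    newtonT m A = (linearPencil A).adjugate.map (coeff · m) := by
  induction m with
  | zero => rw [newtonT, map_coeff_zero_adjugate_linearPencil]
  | succ m ih =>
    rw [newtonT, map_coeff_succ_adjugate_linearPencil, esymmMat_eq_coeff_det_linearPencil hm,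
      ih (by omega)]

variable {E : Type*} [NormedAddCommGroup E] [NormedSpace ℝ E]
  {A : E → Matrix (Fin n) (Fin n) ℝ} {x : E}

theorem hasFDerivAt_esymmMat_succ {A' : Fin n → Fin n → E →L[ℝ] ℝ}
    (hA : ∀ i j, HasFDerivAt (fun y => A y i j) (A' i j) x) (hm : m + 1 ≤ n) :
    HasFDerivAt (fun y => esymmMat (m + 1) (A y))
      (∑ i, ∑ j, newtonT m (A x) j i • A' i j) x := by
  simp only [esymmMat_eq_coeff_det_linearPencil hm,
    newtonT_eq_map_coeff_adjugate_linearPencil (Nat.le_of_succ_le hm), map_apply]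
  exact hasFDerivAt_coeff_det_linearPencil hA m

theorem differentiableAt_newtonT (hA : ∀ i j, DifferentiableAt ℝ (fun y => A y i j) x)
    (hm : m ≤ n) (i j : Fin n) : DifferentiableAt ℝ (fun y => newtonT m (A y) i j) x := by
  induction m generalizing i j with
  | zero => exact differentiableAt_const _
  | succ m ih =>
    have hσ := (hasFDerivAt_esymmMat_succ (fun i j => (hA i j).hasFDerivAt) hm).differentiableAt
    simp only [newtonT, Matrix.sub_apply, Matrix.smul_apply, Matrix.mul_apply, smul_eq_mul]
    exact (hσ.mul_const _).fun_sub
      (DifferentiableAt.fun_sum fun l _ => (ih (by omega) i l).fun_mul (hA l j))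

theorem trace_newtonT_mul_self (hm : m + 1 ≤ n) (A : Matrix (Fin n) (Fin n) ℝ) :
    (newtonT m A * A).trace = (m + 1) * esymmMat (m + 1) A := by
  have hentry (i j : Fin n) : HasFDerivAt (fun s : ℝ => (s • A) i j)
      (ContinuousLinearMap.toSpanSingleton ℝ (A i j)) 1 :=
    (ContinuousLinearMap.toSpanSingleton ℝ (A i j)).hasFDerivAt
  have halong_ray := (hasFDerivAt_esymmMat_succ hentry hm).hasDerivAt
  have hhomogeneous := (hasDerivAt_pow (m + 1) (1 : ℝ)).mul_const (esymmMat (m + 1) A)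
  simp only [esymmMat_smul hm] at halong_ray
  have h := halong_ray.unique hhomogeneous
  rw [trace_mul_comm]
  simpa [trace, Matrix.mul_apply, mul_comm] using h

theorem trace_newtonT (hm : m ≤ n) (A : Matrix (Fin n) (Fin n) ℝ) :
    (newtonT m A).trace = (n - m) * esymmMat m A := by
  cases m with
  | zero =>
    simp [newtonT, esymmMat_eq_sum_minors]
  | succ m =>
    rw [newtonT, trace_sub, trace_smul, trace_one, trace_newtonT_mul_self hm, Fintype.card_fin,
      smul_eq_mul]
    push_cast
    ring

end NewtonTensor

section Divergence

variable {n m : ℕ}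

/-- The divergence `(div B)_j = ∑_i ∂_i B_{ij}` of a matrix field, taken over the row index. -/
noncomputable def matDiv (B : (Fin n → ℝ) → Matrix (Fin n) (Fin n) ℝ) (x : Fin n → ℝ) :
    Fin n → ℝ :=
  fun j => ∑ i, pd i (fun y => B y i j) x

variable {A : (Fin n → ℝ) → Matrix (Fin n) (Fin n) ℝ} {x g : Fin n → ℝ}

theorem pd_esymmMat_succ (hA : ∀ i j, DifferentiableAt ℝ (fun y => A y i j) x)
    (hm : m + 1 ≤ n) (j : Fin n) :
    pd j (fun y => esymmMat (m + 1) (A y)) x =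
      ∑ l, ∑ i, newtonT m (A x) i l * pd j (fun y => A y l i) x := by
  rw [pd, (hasFDerivAt_esymmMat_succ (fun i j => (hA i j).hasFDerivAt) hm).fderiv]
  simp [pd]

theorem matDiv_sub {B B' : (Fin n → ℝ) → Matrix (Fin n) (Fin n) ℝ}
    (hB : ∀ i j, DifferentiableAt ℝ (fun y => B y i j) x)
    (hB' : ∀ i j, DifferentiableAt ℝ (fun y => B' y i j) x) :
    matDiv (fun y => B y - B' y) x = matDiv B x - matDiv B' x := by
  ext j
  simp only [matDiv, pd, Matrix.sub_apply, Pi.sub_apply, ← Finset.sum_sub_distrib]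
  refine Finset.sum_congr rfl fun i _ => ?_
  rw [fderiv_fun_sub (hB i j) (hB' i j), _root_.sub_apply]

theorem matDiv_smul_one (f : (Fin n → ℝ) → ℝ) (x : Fin n → ℝ) :
    matDiv (fun y => f y • (1 : Matrix (Fin n) (Fin n) ℝ)) x = grad f x := by
  ext j
  rw [matDiv, Finset.sum_eq_single_of_mem j (Finset.mem_univ j)]
  · simp [grad, pd]
  · intro i _ hij
    simp [pd, Matrix.one_apply_ne hij]

theorem matDiv_mul {B : (Fin n → ℝ) → Matrix (Fin n) (Fin n) ℝ}
    (hB : ∀ i j, DifferentiableAt ℝ (fun y => B y i j) x)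
    (hA : ∀ i j, DifferentiableAt ℝ (fun y => A y i j) x) (j : Fin n) :
    matDiv (fun y => B y * A y) x j =
      (matDiv B x ᵥ* A x) j + ∑ l, ∑ i, B x i l * pd i (fun y => A y l j) x := by
  have hpd (i : Fin n) : pd i (fun y => (B y * A y) i j) x =
      ∑ l, (pd i (fun y => B y i l) x * A x l j + B x i l * pd i (fun y => A y l j) x) := by
    simp only [pd, Matrix.mul_apply]
    rw [fderiv_fun_sum fun l _ => (hB i l).fun_mul (hA l j), _root_.sum_apply]
    refine Finset.sum_congr rfl fun l _ => ?_
    rw [fderiv_fun_mul (hB i l) (hA l j)]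
    simp [add_comm, mul_comm]
  simp only [matDiv, hpd, vecMul, dotProduct, Finset.sum_mul, ← Finset.sum_add_distrib]
  exact Finset.sum_comm

theorem matDiv_newtonT_succ (hA : ∀ i j, DifferentiableAt ℝ (fun y => A y i j) x)
    (hcodazzi : ∀ i j l, pd j (fun y => A y l i) x - pd i (fun y => A y l j) x =
      g i * (1 : Matrix (Fin n) (Fin n) ℝ) l j - g j * (1 : Matrix (Fin n) (Fin n) ℝ) l i)
    (hm : m + 1 ≤ n) :
    matDiv (fun y => newtonT (m + 1) (A y)) x =
      g ᵥ* newtonT m (A x) - (newtonT m (A x)).trace • g -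
        matDiv (fun y => newtonT m (A y)) x ᵥ* A x := by
  have hσ : DifferentiableAt ℝ (fun y => esymmMat (m + 1) (A y)) x :=
    (hasFDerivAt_esymmMat_succ (fun i j => (hA i j).hasFDerivAt) hm).differentiableAt
  have hT : ∀ i j, DifferentiableAt ℝ (fun y => newtonT m (A y) i j) x :=
    differentiableAt_newtonT hA (Nat.le_of_succ_le hm)
  have hσ_one (i j : Fin n) : DifferentiableAt ℝ
      (fun y => (esymmMat (m + 1) (A y) • (1 : Matrix (Fin n) (Fin n) ℝ)) i j) x :=
    hσ.mul_const _
  have hTA (i j : Fin n) : DifferentiableAt ℝ (fun y => (newtonT m (A y) * A y) i j) x := by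
    simp only [Matrix.mul_apply]
    exact DifferentiableAt.fun_sum fun l _ => (hT i l).fun_mul (hA l j)
  have hcommutator (j : Fin n) : ∑ l, ∑ i, newtonT m (A x) i l * pd j (fun y => A y l i) x -
      ∑ l, ∑ i, newtonT m (A x) i l * pd i (fun y => A y l j) x =
        (g ᵥ* newtonT m (A x)) j - (newtonT m (A x)).trace * g j := by
    simp only [← Finset.sum_sub_distrib, ← mul_sub, hcodazzi]
    simp [mul_sub, Matrix.one_apply, Finset.sum_sub_distrib, vecMul, dotProduct, trace,
      Finset.mul_sum, mul_comm]
  simp only [newtonT]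
  rw [matDiv_sub hσ_one hTA, matDiv_smul_one]
  ext j
  simp only [Pi.sub_apply, Pi.smul_apply, smul_eq_mul, matDiv_mul hT hA, grad,
    pd_esymmMat_succ hA hm, ← hcommutator]
  ring

theorem matDiv_newtonT (hA : ∀ i j, DifferentiableAt ℝ (fun y => A y i j) x)
    (hcodazzi : ∀ i j l, pd j (fun y => A y l i) x - pd i (fun y => A y l j) x =
      g i * (1 : Matrix (Fin n) (Fin n) ℝ) l j - g j * (1 : Matrix (Fin n) (Fin n) ℝ) l i)
    (hm : m + 1 ≤ n) :
    matDiv (fun y => newtonT (m + 1) (A y)) x =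
      -(n - (m + 1) : ℝ) • (g ᵥ* newtonT m (A x)) := by
  induction m with
  | zero =>
    have hdiv : matDiv (fun y => newtonT 0 (A y)) x = 0 := by
      ext j
      simp [matDiv, newtonT, pd]
    rw [matDiv_newtonT_succ hA hcodazzi hm, hdiv]
    simp only [newtonT, vecMul_one, trace_one, Fintype.card_fin, zero_vecMul]
    module
  | succ m ih =>
    have hTA : newtonT m (A x) * A x = esymmMat (m + 1) (A x) • 1 - newtonT (m + 1) (A x) := by
      rw [newtonT, sub_sub_cancel]
    rw [matDiv_newtonT_succ hA hcodazzi hm, ih (by omega), trace_newtonT (by omega),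
      smul_vecMul, vecMul_vecMul, hTA, vecMul_sub, vecMul_smul, vecMul_one]
    push_cast
    module

end Divergence

section AugmentedHessian

variable {n : ℕ} {u h : (Fin n → ℝ) → ℝ} {x : Fin n → ℝ}

theorem contDiffAt_pd {m : ℕ} (hu : ContDiffAt ℝ (m + 1) u x) (i : Fin n) :
    ContDiffAt ℝ m (pd i u) x :=
  hu.fderiv_right_succ.clm_apply contDiffAt_const

theorem pd_comm (hu : ContDiffAt ℝ 2 u x) (i j : Fin n) :
    pd i (pd j u) x = pd j (pd i u) x := by
  have hdiff : DifferentiableAt ℝ (fderiv ℝ u) x :=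
    (hu.fderiv_right (m := 1) (by norm_num)).differentiableAt one_ne_zero
  have pd_pd_eq (a b : Fin n) : pd a (pd b u) x =
      fderiv ℝ (fderiv ℝ u) x (Pi.single a 1) (Pi.single b 1) := by
    change fderiv ℝ (fun y => fderiv ℝ u y (Pi.single b 1)) x (Pi.single a 1) = _
    simp [fderiv_clm_apply hdiff (differentiableAt_const _)]
  rw [pd_pd_eq, pd_pd_eq]
  exact hu.isSymmSndFDerivAt (by simp) _ _

theorem pd_hess_comm (hu : ContDiffAt ℝ 3 u x) (i j l : Fin n) :
    pd i (fun y => hess u y l j) x = pd j (fun y => hess u y l i) x := by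
  have hpd (a : Fin n) : ContDiffAt ℝ 2 (pd a u) x := contDiffAt_pd (m := 2) hu a
  have hess_comm_near : pd i (pd j u) =ᶠ[nhds x] pd j (pd i u) := by
    filter_upwards [hu.eventually (by simp)] with y hy
    exact pd_comm (hy.of_le (by norm_num)) i j
  calc pd i (pd l (pd j u)) x = pd l (pd i (pd j u)) x := pd_comm (hpd j) i l
    _ = pd l (pd j (pd i u)) x := by rw [pd, hess_comm_near.fderiv_eq, pd]
    _ = pd j (pd l (pd i u)) x := pd_comm (hpd i) l j

theorem differentiableAt_hess (hu : ContDiffAt ℝ 3 u x) (i j : Fin n) :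
    DifferentiableAt ℝ (fun y => hess u y i j) x :=
  (contDiffAt_pd (m := 1) (contDiffAt_pd (m := 2) hu j) i).differentiableAt one_ne_zero

theorem pd_hess_sub_smul_one (hu : ContDiffAt ℝ 3 u x) (hh : DifferentiableAt ℝ h x)
    (i j l : Fin n) :
    pd i (fun y => (hess u y - h y • (1 : Matrix (Fin n) (Fin n) ℝ)) l j) x =
      pd i (fun y => hess u y l j) x - pd i h x * (1 : Matrix (Fin n) (Fin n) ℝ) l j := by
  simp only [pd, Matrix.sub_apply, Matrix.smul_apply, smul_eq_mul]
  rw [fderiv_fun_sub (differentiableAt_hess hu l j) (hh.mul_const _), fderiv_mul_const hh]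
  simp [mul_comm]

theorem differentiableAt_comp_prodMk_grad {H₂ : (Fin n → ℝ) × ℝ × (Fin n → ℝ) → ℝ}
    (hu : ContDiffAt ℝ 2 u x) (hH₂ : DifferentiableAt ℝ H₂ (x, u x, grad u x)) :
    DifferentiableAt ℝ (fun y => H₂ (y, u y, grad u y)) x := by
  have hgrad : DifferentiableAt ℝ (grad u) x :=
    differentiableAt_pi.2 fun i => (contDiffAt_pd (m := 1) hu i).differentiableAt one_ne_zero
  exact hH₂.comp x
    (differentiableAt_id.prodMk ((hu.differentiableAt two_ne_zero).prodMk hgrad))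

theorem divergence_formula_linearised_operator_scalarH_general {k : ℕ} (hk2 : 2 ≤ k) (hkn : k ≤ n)
    (hu : ContDiffAt ℝ 3 u x) (hh : DifferentiableAt ℝ h x) (j : Fin n) :
    ∑ i, pd i (fun y => newtonT (k - 1)
        (hess u y - h y • (1 : Matrix (Fin n) (Fin n) ℝ)) i j) x =
      -((n - k + 1 : ℕ) : ℝ) * ∑ i, pd i h x *
        newtonT (k - 2) (hess u x - h x • (1 : Matrix (Fin n) (Fin n) ℝ)) i j := by
  obtain ⟨m, rfl⟩ := Nat.exists_eq_add_of_le' hk2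
  have hdiff (i j : Fin n) : DifferentiableAt ℝ
      (fun y => (hess u y - h y • (1 : Matrix (Fin n) (Fin n) ℝ)) i j) x :=
    (differentiableAt_hess hu i j).sub (hh.mul_const _)
  have hdiv := matDiv_newtonT (m := m) (g := grad h x) hdiff (fun i j l => by
    rw [pd_hess_sub_smul_one hu hh, pd_hess_sub_smul_one hu hh, pd_hess_comm hu j i l,
      grad, grad]
    ring) (by omega)
  have hcoef : ((n - (m + 2) + 1 : ℕ) : ℝ) = n - (m + 1) := by
    push_cast [Nat.cast_sub hkn]
    ring
  rw [hcoef]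
  exact congrFun hdiv j

end AugmentedHessian

/-- Divergence formula for the linearised operator when `H` is a
multiple of the identity (Lemma 3.1, identity (15')). -/
theorem divergence_formula_linearised_operator_scalarH
    {n : ℕ} (hn : 3 ≤ n) (k : ℕ) (hk2 : 2 ≤ k) (hkn : k ≤ n)
    (Ω : Set (Fin n → ℝ)) (hΩ : IsOpen Ω)
    (u : (Fin n → ℝ) → ℝ) (hu : ContDiffOn ℝ 3 u Ω)
    (H₂ : ((Fin n → ℝ) × ℝ × (Fin n → ℝ)) → ℝ)
    (hH₂ : ContDiffOn ℝ 1 H₂ (Ω ×ˢ ((univ : Set ℝ) ×ˢ (univ : Set (Fin n → ℝ))))) :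
    ∀ x ∈ Ω, ∀ j : Fin n,
      ∑ i, pd i (fun y => newtonT (k - 1)
          (hess u y - H₂ (y, u y, grad u y) • (1 : Matrix (Fin n) (Fin n) ℝ)) i j) x
        = -((n - k + 1 : ℕ) : ℝ) *
            ∑ i, pd i (fun y => H₂ (y, u y, grad u y)) x *
              newtonT (k - 2)
                (hess u x - H₂ (x, u x, grad u x) • (1 : Matrix (Fin n) (Fin n) ℝ)) i j := by
  intro x hx j
  have hu_at : ContDiffAt ℝ 3 u x := hu.contDiffAt (hΩ.mem_nhds hx)
  have hH₂_at : DifferentiableAt ℝ H₂ (x, u x, grad u x) :=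
    (hH₂.contDiffAt ((hΩ.prod (isOpen_univ.prod isOpen_univ)).mem_nhds
      ⟨hx, trivial, trivial⟩)).differentiableAt one_ne_zero
  exact divergence_formula_linearised_operator_scalarH_general hk2 hkn hu_at
    (differentiableAt_comp_prodMk_grad (hu_at.of_le (by norm_num)) hH₂_at) j
end

section
/- Newton–Maclaurin-type matrix inequality (inequality (20) in the proof of Lemma 4.3). Let n ≥ 1, let 1 ≤ k ≤ n, and let A be an n×n real symmetric matrix with λ(A) ∈ Γ_k^+. Then tr(A) > 0, σ_k(A) > 0, and the symmetric matrix tr(A)·T_{k−1}(A) − σ_k(A)·I is positive semidefinite; equivalently, T_{k−1}(A)/σ_k(A) ≥ I/tr(A) in the sense of quadratic forms. -/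
open MeasureTheory Metric Set Matrix

/-!
In an orthonormal eigenbasis `A` is diagonal and the eigenvalue of `T_k(A)` on the eigenvector of
`λ_i` is `σ_k(λ | i)`, the elementary symmetric polynomial of the eigenvalues other than `λ_i`.
With `s_j = σ_j(λ | i)`, the recursion `σ_{j+1}(λ) = s_{j+1} + λ_i s_j` turns the eigenvalue
`σ_1(λ) s_k - σ_{k+1}(λ)` into `s_1 s_k - s_{k+1}`. Newton's inequality `s_j s_{j+2} ≤ s_{j+1}²`
gives first the positivity of `s_0, …, s_k`, and then that the ratios `s_{j+1} / s_j` decrease,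
so that `s_{k+1} / s_k ≤ s_1 / s_0 = s_1`.

Newton's inequality comes from Laguerre's inequality `p p'' ≤ p'²` for split `p`, evaluated at `0`
on the derivatives of `∏ (X + r)`, which split by Rolle's theorem.
-/

section NewtonInequality

open Polynomial

/-- Laguerre's inequality: `L(p) = p'² - p p''` satisfies `L(pq) = p² L(q) + q² L(p)`, hence stays
nonnegative under products. -/
theorem eval_mul_eval_derivative_derivative_le_sq {R : Type*} [CommRing R] [LinearOrder R]
    [IsStrictOrderedRing R] {p : R[X]} (hp : p.Splits) (x : R) :
    p.eval x * (derivative (derivative p)).eval x ≤ (derivative p).eval x ^ 2 := by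
  induction hp using Submonoid.closure_induction with
  | mem q hq => rcases hq with ⟨a, rfl⟩ | ⟨a, rfl⟩ <;> simp
  | one => simp
  | mul p q _ _ hp hq =>
    simp only [derivative_mul, derivative_add, eval_add, eval_mul]
    linarith [mul_le_mul_of_nonneg_left hp (sq_nonneg (q.eval x)),
      mul_le_mul_of_nonneg_left hq (sq_nonneg (p.eval x))]

theorem splits_derivative {p : ℝ[X]} (hp : p.Splits) : (derivative p).Splits := by
  rw [splits_iff_card_roots] at hp ⊢
  have h_rolle := card_roots_le_derivative p
  have h_degree := natDegree_derivative_le p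
  have h_card := card_roots' (derivative p)
  omega

theorem splits_iterate_derivative {p : ℝ[X]} (hp : p.Splits) (m : ℕ) :
    (derivative^[m] p).Splits :=
  Function.Iterate.rec (fun q : ℝ[X] => q.Splits) hp (fun _ => splits_derivative) m

theorem add_two_mul_coeff_mul_coeff_le_sq {p : ℝ[X]} (hp : p.Splits) (m : ℕ) :
    (m + 2) * (p.coeff m * p.coeff (m + 2)) ≤ (m + 1) * p.coeff (m + 1) ^ 2 := by
  have h_laguerre :=
    eval_mul_eval_derivative_derivative_le_sq (splits_iterate_derivative hp m) 0
  simp only [← Function.iterate_succ_apply' derivative, ← coeff_zero_eq_eval_zero,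
    coeff_iterate_derivative, zero_add, nsmul_eq_mul, Nat.descFactorial_self,
    Nat.succ_eq_add_one, Nat.factorial_succ] at h_laguerre
  push_cast at h_laguerre
  have h_pos : (0 : ℝ) < (m.factorial : ℝ) ^ 2 * (m + 1) := by positivity
  refine le_of_mul_le_mul_left ?_ h_pos
  linarith

theorem coeff_mul_coeff_le_sq {p : ℝ[X]} (hp : p.Splits) (m : ℕ) :
    p.coeff m * p.coeff (m + 2) ≤ p.coeff (m + 1) ^ 2 := by
  have h_pos : (0 : ℝ) < m + 2 := by positivity
  refine le_of_mul_le_mul_left ?_ h_pos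
  linarith [add_two_mul_coeff_mul_coeff_le_sq hp m, sq_nonneg (p.coeff (m + 1))]

end NewtonInequality

section ElementarySymmetric

variable {R : Type*} [CommSemiring R]

theorem multiset_esymm_zero (s : Multiset R) : s.esymm 0 = 1 := by
  simp [Multiset.esymm]

theorem multiset_esymm_eq_zero_of_card_lt {s : Multiset R} {k : ℕ} (h : s.card < k) :
    s.esymm k = 0 := by
  simp [Multiset.esymm, Multiset.powersetCard_eq_empty _ h]

theorem multiset_esymm_cons_succ (a : R) (s : Multiset R) (k : ℕ) :
    (a ::ₘ s).esymm (k + 1) = s.esymm (k + 1) + a * s.esymm k := by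
  simp [Multiset.esymm, Multiset.powersetCard_cons, Multiset.map_map, Multiset.sum_map_mul_left]

theorem multiset_esymm_succ_eq_erase [DecidableEq R] {s : Multiset R} {a : R} (ha : a ∈ s)
    (k : ℕ) : s.esymm (k + 1) = (s.erase a).esymm (k + 1) + a * (s.erase a).esymm k := by
  rw [← multiset_esymm_cons_succ, Multiset.cons_erase ha]

theorem multiset_esymm_mul_esymm_le_sq (s : Multiset ℝ) (k : ℕ) :
    s.esymm k * s.esymm (k + 2) ≤ s.esymm (k + 1) ^ 2 := by
  rcases lt_or_ge s.card (k + 2) with h_card | h_card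
  · simpa [multiset_esymm_eq_zero_of_card_lt h_card] using sq_nonneg (s.esymm (k + 1))
  obtain ⟨m, hm⟩ := Nat.exists_eq_add_of_le h_card
  have h_splits : (s.map fun r => Polynomial.X + Polynomial.C r).prod.Splits :=
    Polynomial.Splits.multisetProd <| by simp [Polynomial.Splits.X_add_C]
  have h_newton := coeff_mul_coeff_le_sq h_splits m
  rw [Multiset.prod_X_add_C_coeff _ (by omega), Multiset.prod_X_add_C_coeff _ (by omega),
    Multiset.prod_X_add_C_coeff _ (by omega), show s.card - m = k + 2 by omega,
    show s.card - (m + 1) = k + 1 by omega, show s.card - (m + 2) = k by omega] at h_newton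
  rwa [mul_comm]

end ElementarySymmetric

/-- Membership in the Gårding cone `Γ_k^+` for a multiset of real numbers, such as the
eigenvalues of a symmetric matrix. Including `j = 0` costs nothing, since `σ_0 = 1`. -/
def MemGardingCone (k : ℕ) (s : Multiset ℝ) : Prop :=
  ∀ j ≤ k, 0 < s.esymm j

namespace MemGardingCone

variable {k : ℕ} {s : Multiset ℝ} {a : ℝ}

theorem mono {j : ℕ} (h : MemGardingCone k s) (hjk : j ≤ k) : MemGardingCone j s :=
  fun i hi => h i (hi.trans hjk)

theorem erase (h : MemGardingCone (k + 1) s) (ha : a ∈ s) : MemGardingCone k (s.erase a) := by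
  intro j
  induction j with
  | zero => simp [multiset_esymm_zero]
  | succ j ih =>
    intro hj
    set t := s.erase a
    have ht : 0 < t.esymm j := ih (by omega)
    have h_one : 0 < t.esymm (j + 1) + a * t.esymm j :=
      multiset_esymm_succ_eq_erase ha j ▸ h (j + 1) (by omega)
    have h_two : 0 < t.esymm (j + 2) + a * t.esymm (j + 1) :=
      multiset_esymm_succ_eq_erase ha (j + 1) ▸ h (j + 2) (by omega)
    by_contra! h_nonpos
    -- Eliminating `a` from the two recursions contradicts Newton's inequality.
    nlinarith [multiset_esymm_mul_esymm_le_sq t j, mul_pos ht h_two,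
      mul_nonneg (neg_nonneg.2 h_nonpos) h_one.le]

theorem esymm_succ_le (h : MemGardingCone k s) : s.esymm (k + 1) ≤ s.esymm 1 * s.esymm k := by
  induction k with
  | zero => simp [multiset_esymm_zero]
  | succ k ih =>
    refine le_of_mul_le_mul_left ?_ (h k k.le_succ)
    calc s.esymm k * s.esymm (k + 2)
        ≤ s.esymm (k + 1) * s.esymm (k + 1) := by
          simpa only [sq] using multiset_esymm_mul_esymm_le_sq s k
      _ ≤ s.esymm 1 * s.esymm k * s.esymm (k + 1) :=
          mul_le_mul_of_nonneg_right (ih (h.mono k.le_succ)) (h (k + 1) le_rfl).le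
      _ = s.esymm k * (s.esymm 1 * s.esymm (k + 1)) := by ring

theorem esymm_succ_le_esymm_one_mul_esymm_erase (h : MemGardingCone (k + 1) s) (ha : a ∈ s) :
    s.esymm (k + 1) ≤ s.esymm 1 * (s.erase a).esymm k := by
  have h_one : s.esymm 1 = (s.erase a).esymm 1 + a := by
    simpa [multiset_esymm_zero] using multiset_esymm_succ_eq_erase ha 0
  rw [multiset_esymm_succ_eq_erase ha, h_one, add_mul]
  exact add_le_add_left (h.erase ha).esymm_succ_le _

end MemGardingCone

section MatrixInvariants

variable {n : ℕ}

theorem esymmMat_one_eq_trace (hn : 1 ≤ n) (A : Matrix (Fin n) (Fin n) ℝ) :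
    esymmMat 1 A = A.trace := by
  have : Nonempty (Fin n) := ⟨⟨0, hn⟩⟩
  simp [esymmMat, trace_eq_neg_charpoly_coeff]

theorem esymmMat_diagonal {k : ℕ} (hk : k ≤ n) (d : Fin n → ℝ) :
    esymmMat k (diagonal d) = (Finset.univ.val.map d).esymm k := by
  have h_charpoly : (diagonal d).charpoly =
      ((Finset.univ.val.map d).map fun r => Polynomial.X - Polynomial.C r).prod := by
    rw [charpoly_diagonal, Multiset.map_map]
    rfl
  rw [esymmMat, h_charpoly, Multiset.prod_X_sub_C_coeff _ (by simp)]
  simp [Nat.sub_sub_self hk, ← mul_assoc, ← mul_pow]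

theorem newtonT_diagonal {k : ℕ} (hk : k ≤ n) (d : Fin n → ℝ) :
    newtonT k (diagonal d) =
      diagonal fun i => ((Finset.univ.val.map d).erase (d i)).esymm k := by
  induction k with
  | zero => simp [newtonT, multiset_esymm_zero]
  | succ k ih =>
    rw [newtonT, ih (by omega), esymmMat_diagonal hk, diagonal_mul_diagonal,
      smul_one_eq_diagonal, diagonal_sub]
    congr 1
    funext i
    have hi : d i ∈ Finset.univ.val.map d := Multiset.mem_map_of_mem d (Finset.mem_univ_val i)
    rw [multiset_esymm_succ_eq_erase hi]
    ring

theorem memGardingCone_of_gammaPlus_diagonal {k : ℕ} (hk : k ≤ n) {d : Fin n → ℝ}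
    (h : GammaPlus k (diagonal d)) : MemGardingCone k (Finset.univ.val.map d) := by
  rintro (_ | j) hj
  · simp [multiset_esymm_zero]
  · exact esymmMat_diagonal (hj.trans hk) d ▸ h (j + 1) (by omega) hj

theorem posSemidef_esymmMat_one_smul_newtonT_sub_diagonal {k : ℕ} (hk : k + 1 ≤ n)
    {d : Fin n → ℝ} (h : GammaPlus (k + 1) (diagonal d)) :
    (esymmMat 1 (diagonal d) • newtonT k (diagonal d) -
      esymmMat (k + 1) (diagonal d) • (1 : Matrix (Fin n) (Fin n) ℝ)).PosSemidef := by
  rw [esymmMat_diagonal (by omega), esymmMat_diagonal hk, newtonT_diagonal (by omega),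
    ← diagonal_smul, smul_one_eq_diagonal, diagonal_sub]
  refine PosSemidef.diagonal fun i => sub_nonneg.2 ?_
  exact (memGardingCone_of_gammaPlus_diagonal hk h).esymm_succ_le_esymm_one_mul_esymm_erase
    (Multiset.mem_map_of_mem d (Finset.mem_univ_val i))

open Unitary

variable (U : unitary (Matrix (Fin n) (Fin n) ℝ)) (A : Matrix (Fin n) (Fin n) ℝ)

theorem esymmMat_conjStarAlgAut (k : ℕ) : esymmMat k (conjStarAlgAut ℝ _ U A) = esymmMat k A := by
  rw [esymmMat, conjStarAlgAut_apply, charpoly_mul_comm, ← mul_assoc, coe_star_mul_self, one_mul,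
    esymmMat]

theorem newtonT_conjStarAlgAut (k : ℕ) :
    newtonT k (conjStarAlgAut ℝ _ U A) = conjStarAlgAut ℝ _ U (newtonT k A) := by
  induction k with
  | zero => exact (map_one _).symm
  | succ k ih =>
    simp only [newtonT, ih, esymmMat_conjStarAlgAut, map_sub, map_smul, map_mul, map_one]

variable {A}

theorem posSemidef_esymmMat_one_smul_newtonT_sub (hA : A.IsHermitian) {k : ℕ} (hk : k + 1 ≤ n)
    (h : GammaPlus (k + 1) A) :
    (esymmMat 1 A • newtonT k A -
      esymmMat (k + 1) A • (1 : Matrix (Fin n) (Fin n) ℝ)).PosSemidef := by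
  obtain ⟨U, d, rfl⟩ : ∃ U d, A = conjStarAlgAut ℝ _ U (diagonal d) :=
    ⟨hA.eigenvectorUnitary, hA.eigenvalues, hA.spectral_theorem⟩
  simp only [GammaPlus, esymmMat_conjStarAlgAut] at h
  have h_diagonal := posSemidef_esymmMat_one_smul_newtonT_sub_diagonal hk h
  have h_conj : (conjStarAlgAut ℝ _ U _).PosSemidef :=
    h_diagonal.mul_mul_conjTranspose_same (U : Matrix (Fin n) (Fin n) ℝ)
  simpa only [esymmMat_conjStarAlgAut, newtonT_conjStarAlgAut, map_sub, map_smul, map_one]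
    using h_conj

end MatrixInvariants

/-- Newton–Maclaurin-type matrix inequality
(inequality (20) in the proof of Lemma 4.3). -/
theorem newton_maclaurin_matrix_inequality
    {n : ℕ} (hn : 1 ≤ n) (k : ℕ) (hk1 : 1 ≤ k) (hkn : k ≤ n)
    (A : Matrix (Fin n) (Fin n) ℝ) (hA : A.IsSymm) (hGamma : GammaPlus k A) :
    0 < A.trace ∧ 0 < esymmMat k A ∧
      (A.trace • newtonT (k - 1) A - esymmMat k A • (1 : Matrix (Fin n) (Fin n) ℝ)).PosSemidef := by
  have h_trace : esymmMat 1 A = A.trace := esymmMat_one_eq_trace hn A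
  have h_hermitian : A.IsHermitian := isHermitian_iff_isSymm.2 hA
  obtain ⟨m, rfl⟩ := Nat.exists_eq_add_of_le' hk1
  refine ⟨h_trace ▸ hGamma 1 le_rfl hk1, hGamma (m + 1) hk1 le_rfl, ?_⟩
  rw [← h_trace, Nat.add_sub_cancel]
  exact posSemidef_esymmMat_one_smul_newtonT_sub h_hermitian hkn hGamma
end

section
/- Discrete Bochner identity (Lemma 4.10). Let Ω ⊆ ℝⁿ be open, let H₁ : Ω×ℝ → ℝ be any function, let l ∈ {1,…,n} and h ≠ 0, and let x ∈ Ω be such that x, x+he_l, x−he_l ∈ Ω and u : Ω → ℝ is differentiable at x, x+he_l and x−he_l. Write H₁[u](y) := H₁(y,u(y)). Then Δ_{ll}^h(H₁[u]·|∇u|²)(x) = 2·H₁[u](x)·⟨∇u(x), Δ_{ll}^h(∇u)(x)⟩ + H₁[u](x−he_l)·|∇_l^{−h}(∇u)(x)|² + H₁[u](x+he_l)·|∇_l^{h}(∇u)(x)|² + ⟨∇_l^{−h}(∇u)(x), ∇u(x)⟩·∇_l^{−h}(H₁[u])(x) + ⟨∇_l^{h}(∇u)(x), ∇u(x)⟩·∇_l^{h}(H₁[u])(x)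 + ∇_l^h(Φ)(x), where Φ(y) := ⟨∇u(y), ∇u(y−he_l)⟩·∇_l^{−h}(H₁[u])(y). -/
open MeasureTheory Metric Set Matrix

/-!
Apply the Leibniz rule for `Δ_{ll}^h` to `f * g ^ 2` and expand the quotients of `g ^ 2` by the
discrete chain rule: their quadratic corrections `± h (∇_l^{±h} g) ^ 2` move the weight in front of
the squares from `x` to `x ± h e_l`. What remains beyond `2 f g Δ_{ll}^h g` is twice each cross term
`∇_l^{±h} g * g * ∇_l^{±h} f`, plus `g ^ 2 Δ_{ll}^h f`. Discrete summation by parts,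
`Δ_{ll}^h = ∇_l^h ∇_l^{-h}`, turns the last term and one copy of each cross term into `∇_l^h Φ`.
For vector fields, sum over components.
-/

section DifferenceQuotient

variable {n : ℕ} {l : Fin n} {h : ℝ}

theorem dq_sum {ι : Type*} (s : Finset ι) (w : ι → (Fin n → ℝ) → ℝ) (x : Fin n → ℝ) :
    dq l h (fun y => ∑ i ∈ s, w i y) x = ∑ i ∈ s, dq l h (w i) x := by
  simp only [dq, ← Finset.sum_sub_distrib, Finset.sum_div]

theorem ddq_sum {ι : Type*} (s : Finset ι) (w : ι → (Fin n → ℝ) → ℝ) (x : Fin n → ℝ) :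
    ddq l h (fun y => ∑ i ∈ s, w i y) x = ∑ i ∈ s, ddq l h (w i) x := by
  simp only [ddq, Finset.mul_sum, ← Finset.sum_sub_distrib, ← Finset.sum_add_distrib,
    Finset.sum_div]

theorem dq_neg_eq (w : (Fin n → ℝ) → ℝ) (x : Fin n → ℝ) :
    dq l (-h) w x = (w x - w (x - h • (Pi.single l 1 : Fin n → ℝ))) / h := by
  rw [dq, neg_smul, ← sub_eq_add_neg, div_neg, ← neg_div, neg_sub]

theorem dq_neg_add_smul_single (w : (Fin n → ℝ) → ℝ) (x : Fin n → ℝ) :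
    dq l (-h) w (x + h • (Pi.single l 1 : Fin n → ℝ)) = dq l h w x := by
  rw [dq_neg_eq, add_sub_cancel_right, dq]

theorem ddq_eq_dq_sub_dq_neg_div (w : (Fin n → ℝ) → ℝ) (x : Fin n → ℝ) :
    ddq l h w x = (dq l h w x - dq l (-h) w x) / h := by
  rw [ddq, dq_neg_eq, dq]
  ring

theorem apply_add_smul_single (hh : h ≠ 0) (w : (Fin n → ℝ) → ℝ) (x : Fin n → ℝ) :
    w (x + h • (Pi.single l 1 : Fin n → ℝ)) = w x + h * dq l h w x := by
  rw [dq, mul_div_cancel₀ _ hh, add_sub_cancel]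

theorem apply_sub_smul_single (hh : h ≠ 0) (w : (Fin n → ℝ) → ℝ) (x : Fin n → ℝ) :
    w (x - h • (Pi.single l 1 : Fin n → ℝ)) = w x - h * dq l (-h) w x := by
  rw [dq_neg_eq, mul_div_cancel₀ _ hh, sub_sub_cancel]

theorem dq_mul (f g : (Fin n → ℝ) → ℝ) (x : Fin n → ℝ) :
    dq l h (fun y => f y * g y) x
      = f (x + h • (Pi.single l 1 : Fin n → ℝ)) * dq l h g x + dq l h f x * g x := by
  simp only [dq]
  ring

theorem dq_sq (hh : h ≠ 0) (g : (Fin n → ℝ) → ℝ) (x : Fin n → ℝ) :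
    dq l h (fun y => g y ^ 2) x = 2 * g x * dq l h g x + h * dq l h g x ^ 2 := by
  simp only [sq, dq_mul, apply_add_smul_single hh]
  ring

theorem ddq_mul (f g : (Fin n → ℝ) → ℝ) (x : Fin n → ℝ) :
    ddq l h (fun y => f y * g y) x
      = f x * ddq l h g x + dq l h f x * dq l h g x + dq l (-h) f x * dq l (-h) g x
        + g x * ddq l h f x := by
  rw [dq_neg_eq, dq_neg_eq]
  simp only [ddq, dq]
  ring

theorem ddq_sq (g : (Fin n → ℝ) → ℝ) (x : Fin n → ℝ) :
    ddq l h (fun y => g y ^ 2) x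
      = 2 * g x * ddq l h g x + dq l h g x ^ 2 + dq l (-h) g x ^ 2 := by
  simp only [sq, ddq_mul]
  ring

theorem dq_mul_sub_smul_single_mul_dq_neg (hh : h ≠ 0) (f g : (Fin n → ℝ) → ℝ) (x : Fin n → ℝ) :
    dq l h (fun y => g y * g (y - h • (Pi.single l 1 : Fin n → ℝ)) * dq l (-h) f y) x
      = g x ^ 2 * ddq l h f x + dq l h g x * g x * dq l h f x
        + dq l (-h) g x * g x * dq l (-h) f x := by
  rw [dq, dq_neg_add_smul_single, add_sub_cancel_right, apply_add_smul_single hh g,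
    apply_sub_smul_single hh g, ddq_eq_dq_sub_dq_neg_div]
  field_simp
  ring

theorem ddq_mul_sq (hh : h ≠ 0) (f g : (Fin n → ℝ) → ℝ) (x : Fin n → ℝ) :
    ddq l h (fun y => f y * g y ^ 2) x
      = 2 * f x * (g x * ddq l h g x)
        + f (x - h • (Pi.single l 1 : Fin n → ℝ)) * dq l (-h) g x ^ 2
        + f (x + h • (Pi.single l 1 : Fin n → ℝ)) * dq l h g x ^ 2
        + dq l (-h) g x * g x * dq l (-h) f x
        + dq l h g x * g x * dq l h f x
        + dq l h (fun y =>
            g y * g (y - h • (Pi.single l 1 : Fin n → ℝ)) * dq l (-h) f y) x := by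
  rw [ddq_mul, ddq_sq, dq_sq hh, dq_sq (neg_ne_zero.mpr hh), apply_sub_smul_single hh f,
    apply_add_smul_single hh f, dq_mul_sub_smul_single_mul_dq_neg hh]
  ring

end DifferenceQuotient

theorem discrete_bochner_identity_general {n : ℕ} {ι : Type*} [Fintype ι] {l : Fin n} {h : ℝ}
    (hh : h ≠ 0) (f : (Fin n → ℝ) → ℝ) (v : (Fin n → ℝ) → ι → ℝ) (x : Fin n → ℝ) :
    ddq l h (fun y => f y * ∑ i, v y i ^ 2) x
      = 2 * f x * (∑ i, v x i * ddq l h (fun y => v y i) x)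
        + f (x - h • (Pi.single l 1 : Fin n → ℝ)) * (∑ i, dq l (-h) (fun y => v y i) x ^ 2)
        + f (x + h • (Pi.single l 1 : Fin n → ℝ)) * (∑ i, dq l h (fun y => v y i) x ^ 2)
        + (∑ i, dq l (-h) (fun y => v y i) x * v x i) * dq l (-h) f x
        + (∑ i, dq l h (fun y => v y i) x * v x i) * dq l h f x
        + dq l h (fun y =>
            (∑ i, v y i * v (y - h • (Pi.single l 1 : Fin n → ℝ)) i) * dq l (-h) f y) x := by
  simp only [Finset.mul_sum, Finset.sum_mul, ddq_sum, dq_sum, ← Finset.sum_add_distrib]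
  exact Finset.sum_congr rfl fun i _ => ddq_mul_sq hh f (fun y => v y i) x

/-- Discrete Bochner identity (Lemma 4.10). -/
theorem discrete_bochner_identity
    {n : ℕ} (Ω : Set (Fin n → ℝ)) (hΩ : IsOpen Ω)
    (H₁ : ((Fin n → ℝ) × ℝ) → ℝ)
    (l : Fin n) (h : ℝ) (hh : h ≠ 0)
    (u : (Fin n → ℝ) → ℝ) (x : Fin n → ℝ)
    (hx : x ∈ Ω)
    (hxp : x + h • (Pi.single l 1 : Fin n → ℝ) ∈ Ω)
    (hxm : x - h • (Pi.single l 1 : Fin n → ℝ) ∈ Ω)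
    (hux : DifferentiableAt ℝ u x)
    (huxp : DifferentiableAt ℝ u (x + h • (Pi.single l 1 : Fin n → ℝ)))
    (huxm : DifferentiableAt ℝ u (x - h • (Pi.single l 1 : Fin n → ℝ))) :
    ddq l h (fun y => H₁ (y, u y) * normSq (grad u y)) x
      = 2 * H₁ (x, u x) * (∑ i, grad u x i * ddq l h (fun y => grad u y i) x)
        + H₁ (x - h • (Pi.single l 1 : Fin n → ℝ),
              u (x - h • (Pi.single l 1 : Fin n → ℝ))) *
            (∑ i, (dq l (-h) (fun y => grad u y i) x) ^ 2)
        + H₁ (x + h • (Pi.single l 1 : Fin n → ℝ),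
              u (x + h • (Pi.single l 1 : Fin n → ℝ))) *
            (∑ i, (dq l h (fun y => grad u y i) x) ^ 2)
        + (∑ i, dq l (-h) (fun y => grad u y i) x * grad u x i) *
            dq l (-h) (fun y => H₁ (y, u y)) x
        + (∑ i, dq l h (fun y => grad u y i) x * grad u x i) *
            dq l h (fun y => H₁ (y, u y)) x
        + dq l h (fun y =>
            (∑ i, grad u y i * grad u (y - h • (Pi.single l 1 : Fin n → ℝ)) i) *
              dq l (-h) (fun y' => H₁ (y', u y')) y) x :=
  discrete_bochner_identity_general hh (fun y => H₁ (y, u y)) (grad u) x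
end

section
/- Integration-by-parts estimate for antisymmetric coefficient matrices (smooth core of Lemma 4.14). Let n ≥ 1 and let B : ℝⁿ → Mat_n(ℝ) be a C¹ matrix-valued function with compact support such that B(x) is antisymmetric (B(x)ᵀ = −B(x)) for every x. Then for every g ∈ C²(ℝⁿ) and h ∈ C¹(ℝⁿ), one has ∫_{ℝⁿ} Σ_{a,j} B(x)_{aj} ∂_a g(x) ∂_j h(x) dx = −∫_{ℝⁿ} Σ_a (div B)(x)_a ∂_a g(x) h(x) dx, and consequently |∫_{ℝⁿ} Σ_{a,j} B(x)_{aj} ∂_a g(x) ∂_j h(x) dx| ≤ ∫_{ℝⁿ} |div B(x)| |∇g(x)| |h(x)| dx, where (div B)_a := Σ_j ∂_j(B_{aj}). -/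
open MeasureTheory Metric Set Matrix

/-!
Write `X = Bᵀ ∇g`. The left-hand integrand is `X · ∇h`, so integrating by parts gives
`-∫ (div X) h`. By the product rule `div X = (div B) · ∇g + tr (B D²g)`, and the trace vanishes
since `B` is antisymmetric and `D²g` symmetric. Hence only first derivatives of `g` survive, and
the estimate is the Cauchy-Schwarz inequality for `(div B) · ∇g`.
-/

theorem trace_mul_eq_zero_of_transpose_eq_neg {ι R : Type*} [Fintype ι] [CommRing R]
    [IsAddTorsionFree R] {A S : Matrix ι ι R} (hA : Aᵀ = -A) (hS : S.IsSymm) :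
    (A * S).trace = 0 := by
  have trace_eq_neg : (A * S).trace = -(A * S).trace := calc
    (A * S).trace = (A * Sᵀ).trace := by rw [hS.eq]
    _ = (Aᵀ * S).trace := (trace_transpose_mul A Sᵀ).symm
    _ = -(A * S).trace := by rw [hA, neg_mul, trace_neg]
  exact self_eq_neg.mp trace_eq_neg

section EuclideanNorm

variable {n : ℕ}

theorem continuous_vnorm : Continuous (vnorm : (Fin n → ℝ) → ℝ) := by
  unfold vnorm
  fun_prop

theorem vnorm_zero : vnorm (0 : Fin n → ℝ) = 0 := by
  simp [vnorm]

theorem abs_dotProduct_le_vnorm_mul_vnorm (v w : Fin n → ℝ) :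
    |v ⬝ᵥ w| ≤ vnorm v * vnorm w := by
  unfold vnorm dotProduct
  rw [← Real.sqrt_mul (Finset.sum_nonneg fun _ _ => sq_nonneg _)]
  exact Real.abs_le_sqrt (Finset.sum_mul_sq_le_sq_mul_sq _ _ _)

theorem abs_integral_dotProduct_mul_le {α : Type*} [MeasurableSpace α] {μ : Measure α}
    {v w : α → Fin n → ℝ} {h : α → ℝ}
    (hint : Integrable (fun x => vnorm (v x) * vnorm (w x) * |h x|) μ) :
    |∫ x, (v x ⬝ᵥ w x) * h x ∂μ| ≤ ∫ x, vnorm (v x) * vnorm (w x) * |h x| ∂μ := by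
  rw [← Real.norm_eq_abs]
  refine norm_integral_le_of_norm_le hint (Filter.Eventually.of_forall fun x => ?_)
  rw [norm_mul]
  exact mul_le_mul_of_nonneg_right (abs_dotProduct_le_vnorm_mul_vnorm _ _) (abs_nonneg _)

end EuclideanNorm

section PartialDerivatives

variable {n : ℕ} {w : (Fin n → ℝ) → ℝ} {x : Fin n → ℝ}

theorem continuous_pd (i : Fin n) (hw : ContDiff ℝ 1 w) : Continuous (pd i w) :=
  (hw.continuous_fderiv one_ne_zero).clm_apply continuous_const

theorem contDiff_grad {k m : WithTop ℕ∞} (hw : ContDiff ℝ m w) (hkm : k + 1 ≤ m) :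
    ContDiff ℝ k (grad w) :=
  contDiff_pi.2 fun i => (hw.fderiv_right hkm).clm_apply (contDiff_const (c := Pi.single i 1))

theorem pd_mul (j : Fin n) {u v : (Fin n → ℝ) → ℝ} (hu : DifferentiableAt ℝ u x)
    (hv : DifferentiableAt ℝ v x) :
    pd j (fun y => u y * v y) x = u x * pd j v x + pd j u x * v x := by
  simp [pd, fderiv_fun_mul hu hv, mul_comm (v x)]

theorem pd_sum {ι : Type*} [Fintype ι] (j : Fin n) {u : ι → (Fin n → ℝ) → ℝ}
    (hu : ∀ i, DifferentiableAt ℝ (u i) x) :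
    pd j (fun y => ∑ i, u i y) x = ∑ i, pd j (u i) x := by
  simp [pd, fderiv_fun_sum fun i _ => hu i]

theorem pd_eq_zero_of_notMem_tsupport (i : Fin n) (hx : x ∉ tsupport w) : pd i w x = 0 := by
  rw [pd, fderiv_of_notMem_tsupport ℝ hx, _root_.zero_apply]

theorem hess_isSymm (hw : ContDiffAt ℝ 2 w x) : (hess w x).IsSymm := by
  have hess_apply (i j : Fin n) :
      hess w x i j = fderiv ℝ (fderiv ℝ w) x (Pi.single i 1) (Pi.single j 1) := by
    have differentiableAt_fderiv : DifferentiableAt ℝ (fderiv ℝ w) x :=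
      (hw.fderiv_right (m := 1) le_rfl).differentiableAt one_ne_zero
    change fderiv ℝ (fun y => fderiv ℝ w y (Pi.single j 1)) x (Pi.single i 1) = _
    simp [fderiv_clm_apply differentiableAt_fderiv (differentiableAt_const _)]
  ext i j
  rw [transpose_apply, hess_apply, hess_apply]
  exact hw.isSymmSndFDerivAt (by simp) _ _

section IntegrationByParts

variable {μ : Measure (Fin n → ℝ)} {u h : (Fin n → ℝ) → ℝ}

theorem integrable_mul_pd [IsFiniteMeasureOnCompacts μ] (j : Fin n) (hu : Continuous u)
    (hu_supp : HasCompactSupport u) (hh : ContDiff ℝ 1 h) :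
    Integrable (fun x => u x * pd j h x) μ :=
  (hu.mul (continuous_pd j hh)).integrable_of_hasCompactSupport hu_supp.mul_right

theorem integrable_pd_mul [IsFiniteMeasureOnCompacts μ] (j : Fin n) (hu : ContDiff ℝ 1 u)
    (hu_supp : HasCompactSupport u) (hh : Continuous h) :
    Integrable (fun x => pd j u x * h x) μ :=
  ((continuous_pd j hu).mul hh).integrable_of_hasCompactSupport
    (hu_supp.fderiv_apply (𝕜 := ℝ) _).mul_right

theorem integral_mul_pd_eq_neg_integral_pd_mul [μ.IsAddHaarMeasure] (j : Fin n)
    (hu : ContDiff ℝ 1 u) (hu_supp : HasCompactSupport u) (hh : ContDiff ℝ 1 h) :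
    ∫ x, u x * pd j h x ∂μ = -∫ x, pd j u x * h x ∂μ :=
  integral_mul_fderiv_eq_neg_fderiv_mul_of_integrable
    (integrable_pd_mul j hu hu_supp hh.continuous)
    (integrable_mul_pd j hu.continuous hu_supp hh)
    ((hu.continuous.mul hh.continuous).integrable_of_hasCompactSupport hu_supp.mul_right)
    (fun x _ => hu.differentiable one_ne_zero x) (fun x _ => hh.differentiable one_ne_zero x)

end IntegrationByParts

end PartialDerivatives

section Divergence

variable {n : ℕ} {ι : Type*}

/-- The divergence `∑ j, ∂_j X_j` of a vector field on `ℝⁿ`. -/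
noncomputable def divergence (X : (Fin n → ℝ) → Fin n → ℝ) (x : Fin n → ℝ) : ℝ :=
  ∑ j, pd j (fun y => X y j) x

/-- The divergence of a matrix field, taken along rows: `(div B)_a = ∑ j, ∂_j B_{aj}`. -/
noncomputable def rowDivergence (B : (Fin n → ℝ) → Matrix ι (Fin n) ℝ) (x : Fin n → ℝ) : ι → ℝ :=
  fun a => divergence (fun y => B y a) x

theorem continuous_rowDivergence {B : (Fin n → ℝ) → Matrix ι (Fin n) ℝ}
    (hB : ∀ a j, ContDiff ℝ 1 fun x => B x a j) : Continuous (rowDivergence B) :=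
  continuous_pi fun a => continuous_finsetSum Finset.univ fun j _ => continuous_pd j (hB a j)

theorem support_rowDivergence_subset (B : (Fin n → ℝ) → Matrix ι (Fin n) ℝ) :
    Function.support (rowDivergence B) ⊆ tsupport B := by
  refine Function.support_subset_iff'.2 fun x hx => funext fun a => ?_
  have entry_notMem (j : Fin n) : x ∉ tsupport fun y => B y a j := fun hmem =>
    hx (tsupport_comp_subset (g := fun M : Matrix ι (Fin n) ℝ => M a j) rfl B hmem)
  exact Finset.sum_eq_zero (s := Finset.univ) fun j _ =>
    pd_eq_zero_of_notMem_tsupport j (entry_notMem j)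

theorem integral_dotProduct_grad_eq_neg_integral_divergence_mul
    {μ : Measure (Fin n → ℝ)} [μ.IsAddHaarMeasure] {X : (Fin n → ℝ) → Fin n → ℝ}
    {h : (Fin n → ℝ) → ℝ} (hX : ContDiff ℝ 1 X) (hX_supp : HasCompactSupport X)
    (hh : ContDiff ℝ 1 h) :
    ∫ x, X x ⬝ᵥ grad h x ∂μ = -∫ x, divergence X x * h x ∂μ := by
  have hXj (j : Fin n) : ContDiff ℝ 1 fun x => X x j := contDiff_pi.1 hX j
  have hXj_supp (j : Fin n) : HasCompactSupport fun x => X x j :=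
    hX_supp.comp_left (g := fun v : Fin n → ℝ => v j) rfl
  simp only [dotProduct, grad, divergence, Finset.sum_mul]
  rw [integral_finsetSum _ fun j _ => integrable_mul_pd j (hXj j).continuous (hXj_supp j) hh,
    integral_finsetSum _ fun j _ => integrable_pd_mul j (hXj j) (hXj_supp j) hh.continuous,
    ← Finset.sum_neg_distrib]
  exact Finset.sum_congr rfl fun j _ =>
    integral_mul_pd_eq_neg_integral_pd_mul j (hXj j) (hXj_supp j) hh

theorem divergence_vecMul [Fintype ι] {v : (Fin n → ℝ) → ι → ℝ}
    {B : (Fin n → ℝ) → Matrix ι (Fin n) ℝ} {x : Fin n → ℝ}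
    (hv : ∀ a, DifferentiableAt ℝ (fun y => v y a) x)
    (hB : ∀ a j, DifferentiableAt ℝ (fun y => B y a j) x) :
    divergence (fun y => v y ᵥ* B y) x =
      v x ⬝ᵥ rowDivergence B x + (B x * of fun j a => pd j (fun y => v y a) x).trace := by
  have pd_vecMul (j : Fin n) : pd j (fun y => (v y ᵥ* B y) j) x =
      ∑ a, (v x a * pd j (fun y => B y a j) x + pd j (fun y => v y a) x * B x a j) := by
    simp only [vecMul_apply_eq_sum]
    rw [pd_sum j fun a => (hv a).fun_mul (hB a j)]
    exact Finset.sum_congr rfl fun a _ => pd_mul j (hv a) (hB a j)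
  simp only [divergence, pd_vecMul]
  rw [Finset.sum_comm]
  simp only [Finset.sum_add_distrib, dotProduct, rowDivergence, divergence, Finset.mul_sum, trace,
    diag_apply, mul_apply, of_apply, mul_comm]

theorem divergence_vecMul_grad_of_antisymm {B : (Fin n → ℝ) → Matrix (Fin n) (Fin n) ℝ}
    {g : (Fin n → ℝ) → ℝ} {x : Fin n → ℝ} (hB : ∀ a j, DifferentiableAt ℝ (fun y => B y a j) x)
    (hB_anti : (B x)ᵀ = -B x) (hg : ContDiffAt ℝ 2 g x) :
    divergence (fun y => grad g y ᵥ* B y) x = rowDivergence B x ⬝ᵥ grad g x := by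
  have differentiableAt_grad (a : Fin n) : DifferentiableAt ℝ (fun y => grad g y a) x :=
    ((hg.fderiv_right (m := 1) le_rfl).differentiableAt one_ne_zero).clm_apply
      (differentiableAt_const _)
  calc
    divergence (fun y => grad g y ᵥ* B y) x
      = grad g x ⬝ᵥ rowDivergence B x + (B x * hess g x).trace :=
        divergence_vecMul differentiableAt_grad hB
    _ = rowDivergence B x ⬝ᵥ grad g x := by
        rw [trace_mul_eq_zero_of_transpose_eq_neg hB_anti (hess_isSymm hg), add_zero,
          dotProduct_comm]

theorem integral_vecMul_grad_dotProduct_grad_of_antisymm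
    {μ : Measure (Fin n → ℝ)} [μ.IsAddHaarMeasure] {B : (Fin n → ℝ) → Matrix (Fin n) (Fin n) ℝ}
    {g h : (Fin n → ℝ) → ℝ} (hB : ∀ a j, ContDiff ℝ 1 fun x => B x a j)
    (hB_supp : HasCompactSupport B) (hB_anti : ∀ x, (B x)ᵀ = -B x)
    (hg : ContDiff ℝ 2 g) (hh : ContDiff ℝ 1 h) :
    ∫ x, (grad g x ᵥ* B x) ⬝ᵥ grad h x ∂μ =
      -∫ x, (rowDivergence B x ⬝ᵥ grad g x) * h x ∂μ := by
  have contDiff_field : ContDiff ℝ 1 fun x => grad g x ᵥ* B x := by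
    refine contDiff_pi.2 fun j => ?_
    simp only [vecMul_apply_eq_sum]
    exact ContDiff.sum fun a _ => (contDiff_pi.1 (contDiff_grad hg le_rfl) a).mul (hB a j)
  have hasCompactSupport_field : HasCompactSupport fun x => grad g x ᵥ* B x :=
    hB_supp.mono fun x hx hBx => hx (by simp only [hBx, vecMul_zero])
  rw [integral_dotProduct_grad_eq_neg_integral_divergence_mul contDiff_field
    hasCompactSupport_field hh]
  simp only [divergence_vecMul_grad_of_antisymm
    (fun a j => (hB a j).differentiable one_ne_zero _) (hB_anti _) hg.contDiffAt]

theorem integrable_vnorm_rowDivergence_mul {μ : Measure (Fin n → ℝ)}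
    [IsFiniteMeasureOnCompacts μ] {m : ℕ} {B : (Fin n → ℝ) → Matrix (Fin m) (Fin n) ℝ}
    {f : (Fin n → ℝ) → ℝ} (hB : ∀ a j, ContDiff ℝ 1 fun x => B x a j)
    (hB_supp : HasCompactSupport B) (hf : Continuous f) :
    Integrable (fun x => vnorm (rowDivergence B x) * f x) μ :=
  ((continuous_vnorm.comp (continuous_rowDivergence hB)).mul hf).integrable_of_hasCompactSupport
    ((hB_supp.mono' (support_rowDivergence_subset B)).comp_left vnorm_zero).mul_right

end Divergence

/-- Integration-by-parts estimate for antisymmetric coefficient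
matrices (smooth core of Lemma 4.14). -/
theorem antisymmetric_integration_by_parts
    {n : ℕ} (hn : 1 ≤ n)
    (B : (Fin n → ℝ) → Matrix (Fin n) (Fin n) ℝ)
    (hB : ∀ a j : Fin n, ContDiff ℝ 1 (fun x => B x a j))
    (hBsupp : ∃ K : Set (Fin n → ℝ), IsCompact K ∧ ∀ x ∉ K, B x = 0)
    (hBanti : ∀ x, (B x)ᵀ = -B x)
    (g : (Fin n → ℝ) → ℝ) (hg : ContDiff ℝ 2 g)
    (h : (Fin n → ℝ) → ℝ) (hh : ContDiff ℝ 1 h) :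
    (∫ x, ∑ a, ∑ j, B x a j * pd a g x * pd j h x)
        = -∫ x, ∑ a, (∑ j, pd j (fun y => B y a j) x) * pd a g x * h x ∧
    |∫ x, ∑ a, ∑ j, B x a j * pd a g x * pd j h x|
        ≤ ∫ x, vnorm (fun a => ∑ j, pd j (fun y => B y a j) x) * vnorm (grad g x) * |h x| := by
  obtain ⟨K, hK, hBK⟩ := hBsupp
  have hB_supp : HasCompactSupport B := HasCompactSupport.intro hK hBK
  have lhs_eq (x : Fin n → ℝ) : ∑ a, ∑ j, B x a j * pd a g x * pd j h x =
      (grad g x ᵥ* B x) ⬝ᵥ grad h x := by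
    rw [← dotProduct_mulVec]
    simp only [dotProduct, mulVec, grad, Finset.mul_sum]
    exact Finset.sum_congr rfl fun a _ => Finset.sum_congr rfl fun j _ => by ring
  have rhs_eq (x : Fin n → ℝ) : ∑ a, (∑ j, pd j (fun y => B y a j) x) * pd a g x * h x =
      (rowDivergence B x ⬝ᵥ grad g x) * h x :=
    (Finset.sum_mul ..).symm
  have by_parts := integral_vecMul_grad_dotProduct_grad_of_antisymm (μ := volume)
    hB hB_supp hBanti hg hh
  have integrable_bound :
      Integrable fun x => vnorm (rowDivergence B x) * vnorm (grad g x) * |h x| := by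
    simp only [mul_assoc]
    exact integrable_vnorm_rowDivergence_mul hB hB_supp
      ((continuous_vnorm.comp (contDiff_grad (k := 1) hg le_rfl).continuous).mul hh.continuous.abs)
  simp only [lhs_eq, rhs_eq]
  refine ⟨by_parts, ?_⟩
  rw [by_parts, abs_neg]
  exact abs_integral_dotProduct_mul_le integrable_bound
end
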